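/- arXiv:1503.01588 — 3 statements merged into one kernel-verified Lean document; each statement's English description precedes it below -/
import Mathlib

section
/- Fix n ≥ 1, ℓ ≥ 1, t : ℕ, and a one-round protocol Π : (Fin n → (Fin ℓ → Bool)) → Bool whose message space is Fin ℓ → Bool (ℓ-bit messages). Define the single-bit protocol Π' : ((Fin n × Fin ℓ) → Bool) → Bool on n·ℓ players by Π' x = Π (fun i j => x (i, j)). Then for each b : Bool, the probability over a uniformly random x : (Fin n × Fin ℓ) → Bool that x ∈ Robust^{Π'}(b,t) (with Hamming distance counting positions in Fin n × Fin ℓ) is at least the probability over a uniformly random r : Fin n → (Fin ℓ → Bool) that r ∈ Robust^{Π}(b,t) (with Hamming distance counting coordinates in Fin n). -/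
/-- The probability that a uniformly random element of a finite type satisfies `P`. -/
noncomputable def Pr {α : Type*} [Fintype α] (P : α → Prop) : ℝ :=
  letI := Classical.decPred P
  ((Finset.univ.filter P).card : ℝ) / Fintype.card α

/-- `RobustSet proto b t` is the set of message vectors `r` such that every vector within
Hamming distance `t` of `r` (including `r` itself) yields outcome `b`. -/
def RobustSet {ι M : Type*} [Fintype ι] [DecidableEq M]
    (proto : (ι → M) → Bool) (b : Bool) (t : ℕ) : Set (ι → M) :=
  {r | ∀ r', hammingDist r r' ≤ t → proto r' = b}

/-- `proto` is `ε`-secure against `t` strong adaptive corruptions: for every adversary `A`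
changing at most `t` coordinates of the honest messages, every outcome occurs with
probability at least `ε` over uniform honest messages. -/
def StrongSecure {ι M : Type*} [Fintype ι] [DecidableEq ι] [Fintype M] [DecidableEq M]
    (proto : (ι → M) → Bool) (t : ℕ) (ε : ℝ) : Prop :=
  ∀ A : (ι → M) → (ι → M), (∀ r, hammingDist r (A r) ≤ t) →
    ∀ b : Bool, ε ≤ Pr (fun r => proto (A r) = b)

/-!
Currying is a bijection from bit vectors to message vectors, hence preserves the uniform
distribution, and it does not increase the Hamming distance, since `t` altered bits lie in at most
`t` messages. So a bit vector that curries to a robust message vector is itself robust.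
-/

theorem pr_mono {α : Type*} [Fintype α] {P Q : α → Prop} (h : ∀ a, P a → Q a) :
    Pr P ≤ Pr Q := by
  unfold Pr
  gcongr with a
  exact h a

theorem pr_comp_equiv {α β : Type*} [Fintype α] [Fintype β] (e : α ≃ β) (P : β → Prop) :
    Pr (fun a => P (e a)) = Pr P := by
  unfold Pr
  congr 2
  · exact Finset.card_equiv e (by simp)
  · exact Fintype.card_congr e

theorem hammingDist_curry_le {ι κ M : Type*} [Fintype ι] [Fintype κ] [DecidableEq M]
    (x y : ι × κ → M) :
    hammingDist (Function.curry x) (Function.curry y) ≤ hammingDist x y := by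
  classical
  have differing_subset : ({i | Function.curry x i ≠ Function.curry y i} : Finset ι) ⊆
      ({p | x p ≠ y p} : Finset (ι × κ)).image Prod.fst := by
    intro i hi
    obtain ⟨j, hj⟩ := Function.ne_iff.mp (Finset.mem_filter_univ i |>.mp hi)
    exact Finset.mem_image.mpr ⟨(i, j), (Finset.mem_filter_univ _).mpr hj, rfl⟩
  exact (Finset.card_le_card differing_subset).trans Finset.card_image_le

theorem preimage_robustSet_subset {ι κ M N : Type*} [Fintype ι] [Fintype κ] [DecidableEq M]
    [DecidableEq N] {f : (κ → N) → (ι → M)}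
    (hf : ∀ x y, hammingDist (f x) (f y) ≤ hammingDist x y)
    (proto : (ι → M) → Bool) (b : Bool) (t : ℕ) :
    f ⁻¹' RobustSet proto b t ⊆ RobustSet (proto ∘ f) b t :=
  fun x hx y hxy => hx (f y) ((hf x y).trans hxy)

theorem stmt5_general {ι κ M : Type*} [Fintype ι] [DecidableEq ι] [Fintype κ] [DecidableEq κ]
    [Fintype M] [DecidableEq M] (t : ℕ) (proto : (ι → κ → M) → Bool) (b : Bool) :
    Pr (fun r : ι → κ → M => r ∈ RobustSet proto b t)
      ≤ Pr (fun x : ι × κ → M =>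
          x ∈ RobustSet (fun x' : ι × κ → M => proto (fun i j => x' (i, j))) b t) :=
  calc
    Pr (fun r => r ∈ RobustSet proto b t)
      = Pr (fun x : ι × κ → M => Function.curry x ∈ RobustSet proto b t) :=
        (pr_comp_equiv (Equiv.curry ι κ M) _).symm
    _ ≤ Pr (fun x => x ∈ RobustSet (proto ∘ Function.curry) b t) :=
        pr_mono fun _ hx => preimage_robustSet_subset hammingDist_curry_le proto b t hx

/-- Splitting each `ℓ`-bit message into `ℓ` single-bit messages can only
increase the probability of the robust sets (with the same corruption budget `t`). -/
theorem stmt5 {n ℓ : ℕ} (hn : 1 ≤ n) (hℓ : 1 ≤ ℓ) (t : ℕ)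
    (proto : (Fin n → (Fin ℓ → Bool)) → Bool) (b : Bool) :
    Pr (fun r : Fin n → (Fin ℓ → Bool) => r ∈ RobustSet proto b t)
      ≤ Pr (fun x : Fin n × Fin ℓ → Bool =>
          x ∈ RobustSet (fun x' : Fin n × Fin ℓ → Bool =>
            proto (fun i j => x' (i, j))) b t) :=
  stmt5_general t proto b
end

section
/- There is a universal constant C > 0 such that the following holds: for every n ≥ 1, every protocol Π : (Fin n → Bool) → Bool in which each player sends a single uniformly random bit, every ε ∈ ℝ with 0 < ε < 1, and every t : ℕ, if Π is ε-secure against t strong adaptive corruptions, then (t : ℝ) ≤ C · Real.sqrt (n · (1 + Real.log (1/ε))). -/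
/-!
If `f` is 1-Lipschitz for the Hamming distance and `x` is uniform on a product of `n` finite sets,
then `E[exp (l f)] * E[exp (-l f)] ≤ cosh l ^ n`. To gain the factor `cosh l` for one more
coordinate, let `F a` and `G a` be the two expectations given its value `a`; the product to bound
is half the average over pairs `(a, b)` of `F a * G b + F b * G a`. These two cross terms have the
same product as `F a * G a` and `F b * G b`, which are bounded by induction, and they differ at most
by a factor `exp (2|l|)`, since changing one coordinate moves `f` by at most 1.

Applied to the distance to a set `B`, this bounds the probability of a set `A` whose points are all
at distance at least `t` from `B`: optimizing over `l` gives `Pr A * Pr B ≤ exp (-t² / (2n))`.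
Now take for `B` the more likely outcome of the protocol, so that `Pr B ≥ 1/2`, and for `A` the
inputs on which an adversary with `t` corruptions cannot force that outcome, so that `Pr A ≥ ε` by
security.
-/

open Finset Real
open scoped BigOperators

section Probability

variable {Ω : Type*} [Fintype Ω] {P Q : Ω → Prop}

lemma pr_nonneg : 0 ≤ Pr P := by
  unfold Pr
  positivity

lemma pr_mono_s7 (h : ∀ x, P x → Q x) : Pr P ≤ Pr Q := by
  unfold Pr
  gcongr with x
  exact h x

lemma exists_of_pr_pos (h : 0 < Pr P) : ∃ x, P x := by
  contrapose! h
  simp [Pr, h]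

lemma exists_half_le_pr_eq [Nonempty Ω] (φ : Ω → Bool) :
    ∃ b, 1 / 2 ≤ Pr fun x => φ x = b := by
  classical
  have hadd : (Pr fun x => φ x = true) + (Pr fun x => φ x = false) = 1 := by
    have hcard := card_filter_add_card_filter_not (s := (univ : Finset Ω)) (φ · = true)
    simp only [Bool.not_eq_true, card_univ] at hcard
    unfold Pr
    rw [← add_div, div_eq_one_iff_eq (by simp)]
    convert congrArg (Nat.cast (R := ℝ)) hcard using 1
    push_cast
    congr!
  by_contra! h
  linarith [h true, h false]

lemma pr_mul_exp_le_expect_exp {g : Ω → ℝ} {c : ℝ} (h : ∀ x, P x → c ≤ g x) :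
    Pr P * exp c ≤ 𝔼 x, exp (g x) := by
  classical
  rw [Fintype.expect_eq_sum_div_card, Pr, div_mul_eq_mul_div]
  gcongr
  calc (#{x | P x} : ℝ) * exp c = ∑ x with P x, exp c := by simp
    _ ≤ ∑ x with P x, exp (g x) := by
        gcongr with x hx
        exact h x (mem_filter.1 hx).2
    _ ≤ ∑ x, exp (g x) :=
        sum_le_sum_of_subset_of_nonneg (filter_subset _ _) fun _ _ _ => (exp_pos _).le

lemma expect_exp_mul_le {f g : Ω → ℝ} (h : ∀ x, |f x - g x| ≤ 1) (l : ℝ) :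
    𝔼 x, exp (l * f x) ≤ exp |l| * 𝔼 x, exp (l * g x) := by
  rw [mul_expect]
  refine expect_le_expect fun x _ => ?_
  rw [← exp_add, exp_le_exp]
  have hdiff : l * (f x - g x) ≤ |l| := calc
    l * (f x - g x) ≤ |l| * |f x - g x| := (le_abs_self _).trans (abs_mul _ _).le
    _ ≤ |l| := mul_le_of_le_one_right (abs_nonneg l) (h x)
  linarith

lemma expect_mul_expect_le_of_add_le {u v : Ω → ℝ} {K : ℝ} (hK : 0 ≤ K)
    (h : ∀ a b, u a * v b + u b * v a ≤ 2 * K) : (𝔼 a, u a) * 𝔼 b, v b ≤ K := by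
  cases isEmpty_or_nonempty Ω
  · simpa using hK
  have hsymm : (𝔼 a, u a) * (𝔼 b, v b) + (𝔼 a, u a) * 𝔼 b, v b
      = 𝔼 a, 𝔼 b, (u a * v b + u b * v a) := by
    simp only [expect_add_distrib, ← mul_expect, ← expect_mul]
  have hle : 𝔼 a, 𝔼 b, (u a * v b + u b * v a) ≤ 2 * K :=
    expect_le univ_nonempty fun a _ => expect_le univ_nonempty fun b _ => h a b
  linarith

end Probability

section Concentration

lemma add_le_two_mul_cosh {s s' P l : ℝ} (hP : 0 ≤ P) (hprod : s * s' ≤ P ^ 2)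
    (h : s ≤ exp (2 * l) * s') (h' : s' ≤ exp (2 * l) * s) : s + s' ≤ 2 * P * cosh l := by
  refine le_of_sq_le_sq ?_ (by positivity)
  have hexp : exp (2 * l) * exp (-(2 * l)) = 1 := by rw [← exp_add]; simp
  -- For `s / s'` in `[exp (-2l), exp (2l)]` the ratio `(s + s')² / (s s')` peaks at an endpoint.
  have hratio : 0 ≤ (exp (2 * l) * s' - s) * (exp (2 * l) * s - s') * exp (-(2 * l)) :=
    mul_nonneg (mul_nonneg (sub_nonneg.2 h) (sub_nonneg.2 h')) (exp_pos _).le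
  have hcosh_two : exp (2 * l) + exp (-(2 * l)) = 4 * cosh l ^ 2 - 2 := by
    linarith [cosh_eq (2 * l), cosh_two_mul l, cosh_sq l]
  calc (s + s') ^ 2 ≤ 4 * cosh l ^ 2 * (s * s') := by
        linear_combination hratio + s * s' * hcosh_two
          + (s * s' * exp (2 * l) - s ^ 2 - s' ^ 2) * hexp
    _ ≤ 4 * cosh l ^ 2 * P ^ 2 := by gcongr
    _ = (2 * P * cosh l) ^ 2 := by ring

lemma expect_exp_cross_le {Ω : Type*} [Fintype Ω] {f g : Ω → ℝ} {l K : ℝ}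
    (h : ∀ x, |f x - g x| ≤ 1)
    (hf : (𝔼 x, exp (l * f x)) * 𝔼 x, exp (-l * f x) ≤ K)
    (hg : (𝔼 x, exp (l * g x)) * 𝔼 x, exp (-l * g x) ≤ K) :
    (𝔼 x, exp (l * f x)) * (𝔼 x, exp (-l * g x))
      + (𝔼 x, exp (l * g x)) * (𝔼 x, exp (-l * f x)) ≤ 2 * K * cosh l := by
  have hnonneg (m : ℝ) (u : Ω → ℝ) : 0 ≤ 𝔼 x, exp (m * u x) :=
    expect_nonneg fun _ _ => (exp_pos _).le
  have hK : 0 ≤ K := (mul_nonneg (hnonneg l f) (hnonneg (-l) f)).trans hf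
  have hprod : (𝔼 x, exp (l * f x)) * (𝔼 x, exp (-l * g x))
      * ((𝔼 x, exp (l * g x)) * 𝔼 x, exp (-l * f x)) ≤ K ^ 2 := by
    rw [sq, mul_mul_mul_comm, mul_comm (𝔼 x, exp (-l * g x)), mul_mul_mul_comm]
    exact mul_le_mul hf hg (mul_nonneg (hnonneg _ _) (hnonneg _ _)) hK
  have hratio {u v : Ω → ℝ} (huv : ∀ x, |u x - v x| ≤ 1) :
      (𝔼 x, exp (l * u x)) * (𝔼 x, exp (-l * v x))
        ≤ exp (2 * |l|) * ((𝔼 x, exp (l * v x)) * 𝔼 x, exp (-l * u x)) := by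
    have hvu : 𝔼 x, exp (-l * v x) ≤ exp |l| * 𝔼 x, exp (-l * u x) := by
      simpa only [abs_neg] using
        expect_exp_mul_le (fun x => abs_sub_comm (u x) (v x) ▸ huv x) (-l)
    rw [two_mul, exp_add, mul_mul_mul_comm]
    exact mul_le_mul (expect_exp_mul_le huv l) hvu (hnonneg _ _)
      (mul_nonneg (exp_pos _).le (hnonneg _ _))
  rw [← cosh_abs]
  exact add_le_two_mul_cosh hK hprod (hratio h)
    (hratio fun x => abs_sub_comm (f x) (g x) ▸ h x)

lemma hammingDist_fin_cons {n : ℕ} {α : Fin (n + 1) → Type*} [∀ i, DecidableEq (α i)]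
    (a b : α 0) (x y : ∀ i : Fin n, α i.succ) :
    hammingDist (Fin.cons a x : ∀ i, α i) (Fin.cons b y)
      = (if a = b then 0 else 1) + hammingDist x y := by
  simp only [hammingDist, Fin.card_filter_univ_succ, Fin.cons_zero, Fin.cons_succ]
  split_ifs <;> first | contradiction | omega

lemma expect_fin_cons {n : ℕ} {α : Fin (n + 1) → Type*} [∀ i, Fintype (α i)]
    (g : (∀ i, α i) → ℝ) : 𝔼 x, g x = 𝔼 a, 𝔼 y, g (Fin.cons a y) := by
  rw [← Fintype.expect_equiv (Fin.consEquiv α) _ g fun _ => rfl, ← univ_product_univ,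
    expect_product]
  rfl

lemma abs_sub_fin_cons_le_one {n : ℕ} {α : Fin (n + 1) → Type*} [∀ i, DecidableEq (α i)]
    {f : (∀ i, α i) → ℝ} (hf : ∀ x y, f x ≤ f y + hammingDist x y) (a b : α 0)
    (x : ∀ i : Fin n, α i.succ) : |f (Fin.cons a x) - f (Fin.cons b x)| ≤ 1 := by
  have hflip (a b : α 0) : f (Fin.cons a x) ≤ f (Fin.cons b x) + 1 := by
    have hdist : hammingDist (Fin.cons a x : ∀ i, α i) (Fin.cons b x) ≤ 1 := by
      rw [hammingDist_fin_cons]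
      split_ifs <;> simp
    exact (hf _ _).trans (by gcongr; exact_mod_cast hdist)
  exact abs_sub_le_iff.2 ⟨by linarith [hflip a b], by linarith [hflip b a]⟩

lemma expect_exp_mul_expect_exp_neg_le_fin (l : ℝ) : ∀ {n : ℕ} {α : Fin n → Type*}
    [∀ i, Fintype (α i)] [∀ i, DecidableEq (α i)] {f : (∀ i, α i) → ℝ},
    (∀ x y, f x ≤ f y + hammingDist x y) →
      (𝔼 x, exp (l * f x)) * 𝔼 x, exp (-l * f x) ≤ cosh l ^ n
  | 0, α, _, _, f, _ => by simp [← exp_add]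
  | n + 1, α, _, _, f, hf => by
    have hslice (a : α 0) (x y : ∀ i : Fin n, α i.succ) :
        f (Fin.cons a x) ≤ f (Fin.cons a y) + hammingDist x y := by
      simpa [hammingDist_fin_cons] using hf (Fin.cons a x) (Fin.cons a y)
    have ih (a : α 0) := expect_exp_mul_expect_exp_neg_le_fin l (hslice a)
    rw [expect_fin_cons, expect_fin_cons, pow_succ]
    refine expect_mul_expect_le_of_add_le (by positivity) fun a b => ?_
    rw [← mul_assoc]
    exact expect_exp_cross_le (abs_sub_fin_cons_le_one hf a b) (ih a) (ih b)

variable {ι : Type*} [Fintype ι] {α : ι → Type*} [∀ i, DecidableEq (α i)]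

lemma hammingDist_piCongrLeft' {κ : Type*} [Fintype κ] (e : ι ≃ κ) (x y : ∀ i, α i) :
    hammingDist (Equiv.piCongrLeft' α e x) (Equiv.piCongrLeft' α e y) = hammingDist x y :=
  card_equiv e.symm (by simp)

variable [DecidableEq ι] [∀ i, Fintype (α i)]

lemma expect_exp_mul_expect_exp_neg_le (l : ℝ) {f : (∀ i, α i) → ℝ}
    (hf : ∀ x y, f x ≤ f y + hammingDist x y) :
    (𝔼 x, exp (l * f x)) * 𝔼 x, exp (-l * f x) ≤ cosh l ^ Fintype.card ι := by
  let e := Equiv.piCongrLeft' α (Fintype.equivFin ι)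
  have hexpect (g : (∀ i, α i) → ℝ) : 𝔼 x, g x = 𝔼 y, g (e.symm y) :=
    Fintype.expect_equiv e _ _ (by simp)
  rw [hexpect, hexpect]
  refine expect_exp_mul_expect_exp_neg_le_fin l fun x y => ?_
  have hdist := hammingDist_piCongrLeft' (Fintype.equivFin ι) (e.symm x) (e.symm y)
  simpa [e, ← hdist] using hf (e.symm x) (e.symm y)

lemma pr_mul_pr_le_exp_of_le_hammingDist {A B : Set (∀ i, α i)} {t : ℝ} (ht : 0 ≤ t)
    (h : ∀ x ∈ A, ∀ y ∈ B, t ≤ hammingDist x y) :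
    Pr (· ∈ A) * Pr (· ∈ B) ≤ exp (-(t ^ 2 / (2 * Fintype.card ι))) := by
  obtain rfl | hB := B.eq_empty_or_nonempty
  · simpa [Pr] using (exp_pos _).le
  set n : ℝ := (Fintype.card ι : ℝ)
  set l : ℝ := t / n
  let f (x : ∀ i, α i) : ℝ := Metric.infDist (Hamming.toHamming x) (Hamming.ofHamming ⁻¹' B)
  have hf (x y : ∀ i, α i) : f x ≤ f y + hammingDist x y := Metric.infDist_le_infDist_add_dist
  have hfB (x) (hx : x ∈ B) : f x = 0 := Metric.infDist_zero_of_mem hx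
  have hfA (x) (hx : x ∈ A) : t ≤ f x :=
    (Metric.le_infDist (hB.preimage Hamming.ofHamming.surjective)).2 fun y hy => h x hx _ hy
  have hPrB : Pr (· ∈ B) ≤ 𝔼 x, exp (-l * f x) := by
    simpa using pr_mul_exp_le_expect_exp (c := 0) fun x hx => by simp [hfB x hx]
  have hPrA : Pr (· ∈ A) * exp (l * t) ≤ 𝔼 x, exp (l * f x) :=
    pr_mul_exp_le_expect_exp fun x hx => by gcongr; exact hfA x hx
  have hexponent : n * (l ^ 2 / 2) - l * t = -(t ^ 2 / (2 * n)) := by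
    by_cases hn : n = 0
    · simp [l, hn]
    · simp only [l]
      field_simp
      ring
  rw [← hexponent, exp_sub, le_div_iff₀ (exp_pos _)]
  calc Pr (· ∈ A) * Pr (· ∈ B) * exp (l * t)
      = (Pr (· ∈ A) * exp (l * t)) * Pr (· ∈ B) := by ring
    _ ≤ (𝔼 x, exp (l * f x)) * 𝔼 x, exp (-l * f x) :=
        mul_le_mul hPrA hPrB pr_nonneg (expect_nonneg fun _ _ => (exp_pos _).le)
    _ ≤ cosh l ^ Fintype.card ι := expect_exp_mul_expect_exp_neg_le l hf
    _ ≤ exp (l ^ 2 / 2) ^ Fintype.card ι := by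
        gcongr
        exact cosh_le_exp_half_sq l
    _ = exp (n * (l ^ 2 / 2)) := (exp_nat_mul _ _).symm

end Concentration

section CoinFlipping

variable {ι M : Type*} [Fintype ι] [DecidableEq M] {proto : (ι → M) → Bool} {t : ℕ}

lemma lt_hammingDist_of_mem_robustSet {b : Bool} {r r' : ι → M} (hr : r ∈ RobustSet proto b t)
    (hr' : proto r' ≠ b) : t < hammingDist r r' := by
  contrapose! hr'
  exact hr r' hr'

variable [DecidableEq ι] [Fintype M] {ε : ℝ}

lemma StrongSecure.le_pr_mem_robustSet (h : StrongSecure proto t ε) (b : Bool) :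
    ε ≤ Pr (· ∈ RobustSet proto b t) := by
  have hattack (r : ι → M) :
      ∃ r', hammingDist r r' ≤ t ∧ (proto r' = b → r ∈ RobustSet proto b t) := by
    by_cases hr : r ∈ RobustSet proto b t
    · exact ⟨r, by simp, fun _ => hr⟩
    · obtain ⟨r', hdist, hne⟩ : ∃ r', hammingDist r r' ≤ t ∧ proto r' ≠ b := by
        simpa [RobustSet] using hr
      exact ⟨r', hdist, fun heq => absurd heq hne⟩
  choose A hA hrobust using hattack
  exact (h A hA b).trans (pr_mono_s7 hrobust)

lemma StrongSecure.nonempty_index (h : StrongSecure proto t ε) (hε : 0 < ε) : Nonempty ι := by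
  obtain ⟨r, hr⟩ := exists_of_pr_pos (hε.trans_le (h.le_pr_mem_robustSet true))
  obtain ⟨r', hr'⟩ := exists_of_pr_pos (hε.trans_le (h.le_pr_mem_robustSet false))
  by_contra! hempty
  have htrue : proto r = true := hr r (by simp)
  have hfalse : proto r = false := hr' r (by simp [Subsingleton.elim r' r])
  simp [htrue] at hfalse

lemma StrongSecure.mul_half_le_exp (h : StrongSecure proto t ε) (hε : 0 < ε) :
    ε * (1 / 2) ≤ exp (-(t ^ 2 / (2 * Fintype.card ι))) := by
  obtain ⟨r₀, -⟩ := exists_of_pr_pos (hε.trans_le (h.le_pr_mem_robustSet true))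
  have : Nonempty (ι → M) := ⟨r₀⟩
  obtain ⟨b, hb⟩ := exists_half_le_pr_eq proto
  have hfar (r) (hr : r ∈ RobustSet proto (!b) t) (r') (hr' : r' ∈ {r' | proto r' = b}) :
      (t : ℝ) ≤ hammingDist r r' := by
    have hne : proto r' ≠ !b := by simp [hr'.out]
    exact_mod_cast (lt_hammingDist_of_mem_robustSet hr hne).le
  calc ε * (1 / 2) ≤ Pr (· ∈ RobustSet proto (!b) t) * Pr (· ∈ {r | proto r = b}) :=
        mul_le_mul (h.le_pr_mem_robustSet _) hb (by norm_num) pr_nonneg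
    _ ≤ exp (-(t ^ 2 / (2 * Fintype.card ι))) :=
        pr_mul_pr_le_exp_of_le_hammingDist t.cast_nonneg hfar

end CoinFlipping

theorem stmt7_general {ι M : Type*} [Fintype ι] [DecidableEq ι] [Fintype M] [DecidableEq M]
    {proto : (ι → M) → Bool} {t : ℕ} {ε : ℝ} (hε : 0 < ε) (h : StrongSecure proto t ε) :
    (t : ℝ) ≤ √2 * √(Fintype.card ι * (1 + log (1 / ε))) := by
  have := h.nonempty_index hε
  have hn : (0 : ℝ) < Fintype.card ι := by exact_mod_cast Fintype.card_pos
  have hlog : log (ε * (1 / 2)) ≤ -(t ^ 2 / (2 * Fintype.card ι)) :=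
    (log_le_iff_le_exp (by positivity)).2 (h.mul_half_le_exp hε)
  have hlog_half : log (ε * (1 / 2)) = -(log 2 + log (1 / ε)) := by
    rw [log_mul hε.ne' (by norm_num), one_div, one_div, log_inv, log_inv]
    ring
  have hlog_two : log 2 ≤ 1 := by linarith [log_two_lt_d9]
  have hquot : (t : ℝ) ^ 2 / (2 * Fintype.card ι) ≤ 1 + log (1 / ε) := by linarith
  rw [← sqrt_mul zero_le_two]
  apply le_sqrt_of_sq_le
  rw [div_le_iff₀ (mul_pos two_pos hn)] at hquot
  linarith

/-- (Single-bit bound, one-round, strong adaptive.) There is a universal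
constant `C > 0` such that any single-bit one-round protocol that is `ε`-secure against `t`
strong adaptive corruptions satisfies `t ≤ C·√(n·(1 + log(1/ε)))`. -/
theorem stmt7 : ∃ C : ℝ, 0 < C ∧ ∀ n : ℕ, 1 ≤ n →
    ∀ proto : (Fin n → Bool) → Bool, ∀ ε : ℝ, 0 < ε → ε < 1 → ∀ t : ℕ,
      StrongSecure proto t ε →
        (t : ℝ) ≤ C * Real.sqrt (n * (1 + Real.log (1 / ε))) := by
  refine ⟨√2, by positivity, fun n _ proto ε hε _ t h => ?_⟩
  simpa using stmt7_general hε h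
end

section
/- Fix n ≥ 1, s ≥ 1, a nonempty finite message space M, ε ∈ ℝ with 0 < ε < 1, and a symmetric one-round protocol Π : (Fin (n + 2·s) → M) → Bool. Suppose Π is ε-secure against 2·s static rushing corruptions. Then there exists a symmetric one-round protocol Π' : (Fin n → M) → Bool that is ε-secure against s strong adaptive corruptions. -/
/-- A one-round protocol is symmetric if its outcome is invariant under any permutation of
the players' messages. -/
def SymmetricProto {ι M : Type*} (proto : (ι → M) → Bool) : Prop :=
  ∀ (π : Equiv.Perm ι) (r : ι → M), proto (r ∘ π) = proto r

/-- `proto` is `ε`-secure against `t` static rushing corruptions: for every set `S` of at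
most `t` players and every adversary `A` that only alters the messages of players in `S`,
and whose alterations depend only on the messages of players outside `S`, every outcome
occurs with probability at least `ε` over uniform honest messages. -/
def RushingSecure {ι M : Type*} [Fintype ι] [DecidableEq ι] [Fintype M]
    (proto : (ι → M) → Bool) (t : ℕ) (ε : ℝ) : Prop :=
  ∀ S : Finset ι, S.card ≤ t →
    ∀ A : (ι → M) → (ι → M),
      (∀ r, ∀ i ∉ S, A r i = r i) →
      (∀ r r', (∀ i ∉ S, r i = r' i) → A r = A r') →
      ∀ b : Bool, ε ≤ Pr (fun r => proto (A r) = b)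

/-!
Say that messages `x` of a smaller set of players force the outcome `b` if `proto` outputs `b`
whenever `x` is part of the messages, no matter which players send `x` and what the others send.
By symmetry it is enough to check one choice of senders. A rushing adversary controlling everybody
else sees `x` and can avoid `b` unless `x` forces `b`; hence each `b` is forced with probability at
least `ε`.

If `x` and `x'` differ on few enough coordinates, the entries of `x'` that differ from `x` can be
handed to players outside the senders of `x`, so that a single message vector contains both `x`
and `x'`. Vectors forcing opposite outcomes are therefore more than `2s` apart, and the protocol
that outputs `true` within distance `s` of the vectors forcing `true` cannot be moved by `s`
adaptive corruptions away from either kind of forcing vector.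
-/

section Probability

variable {α β : Type*} [Fintype α] [Fintype β]

lemma Pr_mono {P Q : α → Prop} (h : ∀ a, P a → Q a) : Pr P ≤ Pr Q := by
  classical
  unfold Pr
  gcongr
  exact h _

lemma Pr_comp_equiv (e : α ≃ β) (P : β → Prop) : Pr (fun a => P (e a)) = Pr P := by
  classical
  unfold Pr
  rw [Fintype.card_congr e]
  congr 2
  exact Finset.card_equiv e (by simp)

lemma Pr_comp_fst [Nonempty β] (P : α → Prop) : Pr (fun p : α × β => P p.1) = Pr P := by
  classical
  have hfilter : (Finset.univ.filter fun p : α × β => P p.1) =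
      Finset.univ.filter P ×ˢ Finset.univ := by
    ext
    simp
  have hβ : (Fintype.card β : ℝ) ≠ 0 := by exact_mod_cast Fintype.card_ne_zero
  unfold Pr
  convert mul_div_mul_right _ _ hβ using 2
  · rw [← Nat.cast_mul, ← Finset.card_univ, ← Finset.card_product, ← hfilter]
  · rw [Fintype.card_prod, Nat.cast_mul]

lemma Pr_comp_embedding {ι N M : Type*} [Fintype ι] [DecidableEq ι] [Fintype N] [DecidableEq N]
    [Fintype M] [Nonempty M] (f : ι ↪ N) (P : (ι → M) → Prop) :
    Pr (fun r : N → M => P (r ∘ f)) = Pr P := by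
  classical
  let rangeSum : ι ⊕ ↥(Set.range f)ᶜ ≃ N :=
    ((Equiv.ofInjective f f.injective).sumCongr (Equiv.refl _)).trans
      (Equiv.Set.sumCompl (Set.range f))
  let e : (N → M) ≃ (ι → M) × (↥(Set.range f)ᶜ → M) :=
    (rangeSum.symm.arrowCongr (Equiv.refl M)).trans (Equiv.sumArrowEquivProdArrow _ _ _)
  exact (Pr_comp_equiv e fun p => P p.1).trans (Pr_comp_fst P)

end Probability

lemma exists_perm_comp_embedding_eq {ι N : Type*} [Finite N] (f g : ι ↪ N) :
    ∃ σ : Equiv.Perm N, σ ∘ f = g := by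
  classical
  have := Fintype.ofFinite N
  let e := (Equiv.ofInjective f f.injective).symm.trans (Equiv.ofInjective g g.injective)
  refine ⟨e.extendSubtype, funext fun i => ?_⟩
  simp [Equiv.extendSubtype_apply_of_mem e (f i) ⟨i, rfl⟩, e]

lemma hammingDist_comp_perm {ι M : Type*} [Fintype ι] [DecidableEq M] (π : Equiv.Perm ι)
    (x y : ι → M) : hammingDist (x ∘ π) (y ∘ π) = hammingDist x y :=
  Finset.card_equiv π (by simp)

lemma strongSecure_of_le_Pr_robustSet {ι M : Type*} [Fintype ι] [DecidableEq ι] [Fintype M]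
    [DecidableEq M] {proto : (ι → M) → Bool} {t : ℕ} {ε : ℝ}
    (h : ∀ b, ε ≤ Pr (· ∈ RobustSet proto b t)) : StrongSecure proto t ε :=
  fun A hA b => (h b).trans (Pr_mono fun r hr => hr (A r) (hA r))

section NearProto

variable {ι M : Type*} [Fintype ι] [DecidableEq M] {T : Set (ι → M)} {s : ℕ} {r : ι → M}

open Classical in
/-- The one-round protocol with outcome `true` exactly on the closed `s`-neighbourhood of `T` in
the Hamming distance. -/
noncomputable def nearProto (T : Set (ι → M)) (s : ℕ) (r : ι → M) : Bool :=
  decide (∃ x ∈ T, hammingDist r x ≤ s)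

lemma nearProto_eq_true_iff : nearProto T s r = true ↔ ∃ x ∈ T, hammingDist r x ≤ s := by
  simp only [nearProto, decide_eq_true_iff]

lemma symmetricProto_nearProto (hT : ∀ (π : Equiv.Perm ι), ∀ x ∈ T, x ∘ π ∈ T) :
    SymmetricProto (nearProto T s) := by
  have near_comp (π : Equiv.Perm ι) (r : ι → M) (h : nearProto T s r = true) :
      nearProto T s (r ∘ π) = true := by
    obtain ⟨x, hx, hrx⟩ := nearProto_eq_true_iff.mp h
    exact nearProto_eq_true_iff.mpr
      ⟨x ∘ π, hT π x hx, (hammingDist_comp_perm π r x).trans_le hrx⟩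
  refine fun π r => Bool.eq_iff_iff.mpr ⟨fun h => ?_, near_comp π r⟩
  simpa [Function.comp_assoc] using near_comp π.symm (r ∘ π) h

lemma mem_robustSet_nearProto_true (hr : r ∈ T) : r ∈ RobustSet (nearProto T s) true s :=
  fun r' hr' => nearProto_eq_true_iff.mpr ⟨r, hr, by rwa [hammingDist_comm]⟩

lemma mem_robustSet_nearProto_false {t : ℕ} (hr : ∀ x ∈ T, t + s < hammingDist r x) :
    r ∈ RobustSet (nearProto T s) false t := by
  intro r' hr'
  by_contra htrue
  obtain ⟨x, hx, hr'x⟩ := nearProto_eq_true_iff.mp (Bool.eq_true_of_not_eq_false htrue)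
  have := hammingDist_triangle r r' x
  have := hr x hx
  lia

end NearProto

lemma exists_common_completion {ι N M : Type*} [Fintype ι] [Fintype N] [Nonempty M]
    [DecidableEq M] {x x' : ι → M}
    (h : Fintype.card ι + hammingDist x x' ≤ Fintype.card N) :
    ∃ (f g : ι ↪ N) (r : N → M), r ∘ f = x ∧ r ∘ g = x' := by
  let D := {i // x i ≠ x' i}
  let move : ι → ι ⊕ D := fun i => if hi : x i ≠ x' i then .inr ⟨i, hi⟩ else .inl i
  have move_leftInverse : Function.LeftInverse (Sum.elim id Subtype.val) move := by
    intro i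
    by_cases hi : x i = x' i <;> simp [move, hi]
  have elim_move : Sum.elim x (fun d : D => x' d) ∘ move = x' := by
    funext i
    by_cases hi : x i = x' i <;> simp [move, hi]
  obtain ⟨k⟩ : Nonempty (ι ⊕ D ↪ N) := by
    apply Function.Embedding.nonempty_of_card_le
    simpa [D, Fintype.card_subtype, hammingDist] using h
  obtain ⟨r, hr⟩ := k.injective.surjective_comp_right (Sum.elim x fun d : D => x' d)
  refine ⟨.trans .inl k, .trans ⟨move, move_leftInverse.injective⟩ k, r, ?_, ?_⟩
  · exact congrArg (· ∘ Sum.inl) hr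
  · exact (congrArg (· ∘ move) hr).trans elim_move

/-- `x` forces the outcome `b` if `proto` outputs `b` whenever the messages `x` occur among its
inputs. The senders of `x` are an arbitrary embedding `f`, so that the notion is invariant under
permutations of `x` by construction; it is vacuous if `N` is smaller than `ι`. -/
def Forces {ι N M : Type*} (proto : (N → M) → Bool) (b : Bool) (x : ι → M) : Prop :=
  ∀ (f : ι ↪ N) (r : N → M), r ∘ f = x → proto r = b

section Forces

variable {ι N M : Type*} {proto : (N → M) → Bool} {b b' : Bool} {x x' : ι → M}

lemma Forces.comp_perm (h : Forces proto b x) (π : Equiv.Perm ι) : Forces proto b (x ∘ π) := by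
  intro f r hr
  refine h (π.symm.toEmbedding.trans f) r ?_
  calc r ∘ f ∘ π.symm = (x ∘ π) ∘ π.symm := by rw [← Function.comp_assoc, hr]
    _ = x := by simp [Function.comp_assoc]

lemma Forces.eq_of_card_add_hammingDist_le [Fintype ι] [Fintype N] [Nonempty M] [DecidableEq M]
    (h : Forces proto b x) (h' : Forces proto b' x')
    (hd : Fintype.card ι + hammingDist x x' ≤ Fintype.card N) : b = b' := by
  obtain ⟨f, g, r, hf, hg⟩ := exists_common_completion hd
  exact (h f r hf).symm.trans (h' g r hg)

lemma Forces.strongSecure_nearProto [Fintype ι] [DecidableEq ι] [Fintype N] [Fintype M]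
    [Nonempty M] [DecidableEq M] {s : ℕ} {ε : ℝ}
    (hs : Fintype.card ι + 2 * s ≤ Fintype.card N)
    (h : ∀ b, ε ≤ Pr (Forces (ι := ι) proto b)) :
    StrongSecure (nearProto {x : ι → M | Forces proto true x} s) s ε := by
  refine strongSecure_of_le_Pr_robustSet fun b => (h b).trans (Pr_mono fun r hr => ?_)
  cases b with
  | true => exact mem_robustSet_nearProto_true hr
  | false =>
    refine mem_robustSet_nearProto_false fun x hx => ?_
    by_contra! hrx
    exact Bool.false_ne_true (hr.eq_of_card_add_hammingDist_le hx (by lia))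

lemma SymmetricProto.forces_of_embedding [Finite N] (hsym : SymmetricProto proto) (f : ι ↪ N)
    (h : ∀ r : N → M, r ∘ f = x → proto r = b) : Forces proto b x := by
  intro g r hr
  obtain ⟨σ, hσ⟩ := exists_perm_comp_embedding_eq f g
  rw [← hsym σ r]
  exact h (r ∘ σ) (by rw [Function.comp_assoc, hσ, hr])

variable [Fintype N] [DecidableEq N] [Fintype M] [Nonempty M] {t : ℕ} {ε : ℝ}

lemma RushingSecure.le_Pr_forall_completion [Fintype ι] [DecidableEq ι]
    (hsec : RushingSecure proto t ε) (f : ι ↪ N) (ht : Fintype.card N ≤ Fintype.card ι + t)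
    (b : Bool) : ε ≤ Pr (fun x : ι → M => ∀ r : N → M, r ∘ f = x → proto r = b) := by
  have exists_best_response (x : ι → M) : ∃ r : N → M, r ∘ f = x ∧
      (proto r = b → ∀ r' : N → M, r' ∘ f = x → proto r' = b) := by
    by_cases h : ∀ r : N → M, r ∘ f = x → proto r = b
    · obtain ⟨r, hr⟩ := f.injective.surjective_comp_right x
      exact ⟨r, hr, fun _ => h⟩
    · push Not at h
      obtain ⟨r, hr, hne⟩ := h
      exact ⟨r, hr, fun heq => absurd heq hne⟩
  choose best best_comp best_spec using exists_best_response
  have hcard : ((Finset.univ.map f)ᶜ).card ≤ t := by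
    rw [Finset.card_compl, Finset.card_map, Finset.card_univ]
    lia
  have key := hsec (Finset.univ.map f)ᶜ hcard (fun r => best (r ∘ f)) ?_ ?_ b
  · rw [← Pr_comp_embedding f]
    exact key.trans (Pr_mono fun r => best_spec (r ∘ f))
  · intro r i hi
    obtain ⟨j, rfl⟩ : ∃ j, f j = i := by simpa using hi
    exact congrFun (best_comp (r ∘ f)) j
  · intro r r' h
    have hrr' : r ∘ f = r' ∘ f := funext fun j => h (f j) (by simp)
    simp only [hrr']

lemma RushingSecure.le_Pr_forces [Fintype ι] [DecidableEq ι] (hsec : RushingSecure proto t ε)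
    (hsym : SymmetricProto proto) (hι : Fintype.card ι ≤ Fintype.card N)
    (ht : Fintype.card N ≤ Fintype.card ι + t) (b : Bool) :
    ε ≤ Pr (Forces (ι := ι) proto b) := by
  obtain ⟨f⟩ := Function.Embedding.nonempty_of_card_le hι
  exact (hsec.le_Pr_forall_completion f ht b).trans
    (Pr_mono fun _ => hsym.forces_of_embedding f)

end Forces

theorem stmt10_general {ι N M : Type*} [Fintype ι] [DecidableEq ι] [Fintype N] [DecidableEq N]
    [Fintype M] [Nonempty M] [DecidableEq M] {s t : ℕ} {ε : ℝ} {proto : (N → M) → Bool}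
    (hs : Fintype.card ι + 2 * s ≤ Fintype.card N)
    (ht : Fintype.card N ≤ Fintype.card ι + t)
    (hsym : SymmetricProto proto) (hsec : RushingSecure proto t ε) :
    ∃ proto' : (ι → M) → Bool, SymmetricProto proto' ∧ StrongSecure proto' s ε :=
  ⟨nearProto {x | Forces proto true x} s, symmetricProto_nearProto fun π _ hx => hx.comp_perm π,
    Forces.strongSecure_nearProto hs (hsec.le_Pr_forces hsym (by lia) ht)⟩

/-- From any symmetric one-round protocol on `n + 2s` players that is
`ε`-secure against `2s` static rushing corruptions, one obtains a symmetric one-round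
protocol on `n` players that is `ε`-secure against `s` strong adaptive corruptions. -/
theorem stmt10 {n s : ℕ} (hn : 1 ≤ n) (hs : 1 ≤ s) {M : Type*}
    [Fintype M] [Nonempty M] [DecidableEq M]
    {ε : ℝ} (hε0 : 0 < ε) (hε1 : ε < 1)
    (proto : (Fin (n + 2 * s) → M) → Bool)
    (hsym : SymmetricProto proto)
    (hsec : RushingSecure proto (2 * s) ε) :
    ∃ proto' : (Fin n → M) → Bool,
      SymmetricProto proto' ∧ StrongSecure proto' s ε := by
  exact stmt10_general (by simp) (by simp) hsym hsec
end
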